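/- arXiv:1203.6869 — 2 statements merged into one kernel-verified Lean document; each statement's English description precedes it below -/
import Mathlib

section
/- For all ψ, α ∈ ℝ, the element r(ψ,α) = ½(P_a ⊗ J^a + J^a ⊗ P_a) + ½ tanh(ψ/2)(P₂ ∧ J₀ − P₀ ∧ J₂) + (α / (4 cosh²(ψ/2))) P₂ ∧ P₀ of iso(2,1) ⊗ iso(2,1) is invariant under the Cartan subalgebra 𝔥₂ = span{J₁, P₁}: for every x ∈ 𝔥₂, (ad_x ⊗ id + id ⊗ ad_x)(r(ψ,α)) = 0. -/
noncomputable section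

open scoped TensorProduct

/-- The ambient associative algebra: real 4×4 matrices.  `iso(2,1)` is realized inside it
via the standard affine embedding `x ↦ [[u, a], [0, 0]]`, and the Lie bracket is the
matrix commutator `⁅x, y⁆ = x * y - y * x`. -/
abbrev G : Type := Matrix (Fin 4) (Fin 4) ℝ

/-- The totally antisymmetric tensor in three dimensions with `eps 0 1 2 = 1`. -/
def eps (a b c : Fin 3) : ℝ :=
  ((((b : ℕ) : ℝ) - ((a : ℕ) : ℝ)) * (((c : ℕ) : ℝ) - ((a : ℕ) : ℝ)) *
    (((c : ℕ) : ℝ) - ((b : ℕ) : ℝ))) / 2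

/-- The Minkowski metric η = diag(1, −1, −1); it coincides with its inverse, so `ηf`
is used both for lower and upper indices. -/
def ηf (a b : Fin 3) : ℝ := if a = b then (if a = (0 : Fin 3) then 1 else -1) else 0

/-- The 3×3 Lorentz generators of so(2,1): `(J3 a) b c = (J_a)^b{}_c = ε_{ac}{}^b`. -/
def J3 (a : Fin 3) : Matrix (Fin 3) (Fin 3) ℝ :=
  Matrix.of fun b c => ηf b b * eps a c b

/-- Embedding of a pair (3×3 matrix `u`, vector `x`) as the 4×4 matrix `[[u, x], [0, 0]]`. -/
def algEmb (u : Matrix (Fin 3) (Fin 3) ℝ) (x : Fin 3 → ℝ) : G :=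
  Matrix.of fun i j =>
    if hi : (i : ℕ) < 3 then
      if hj : (j : ℕ) < 3 then u ⟨i, hi⟩ ⟨j, hj⟩ else x ⟨i, hi⟩
    else 0

/-- The Lorentz generators `J_a` of iso(2,1), as 4×4 matrices. -/
def Jg (a : Fin 3) : G := algEmb (J3 a) 0

/-- The translation generators `P_a` of iso(2,1), as 4×4 matrices. -/
def Pg (a : Fin 3) : G := algEmb 0 (fun b => if b = a then 1 else 0)

/-- `iso(2,1)` = span{J₀, J₁, J₂, P₀, P₁, P₂} inside the 4×4 matrices. -/
def iso21 : Submodule ℝ G := Submodule.span ℝ (Set.range Jg ∪ Set.range Pg)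

/-- 𝔤 ⊗ 𝔤. -/
abbrev T2 : Type := TensorProduct ℝ G G

/-- `ad_x = [x, ·]` as a linear map. -/
def adL (x : G) : G →ₗ[ℝ] G := LinearMap.mulLeft ℝ x - LinearMap.mulRight ℝ x

/-- `ad_x ⊗ id + id ⊗ ad_x` acting factor-wise on 𝔤 ⊗ 𝔤. -/
def adT (x : G) : T2 →ₗ[ℝ] T2 :=
  TensorProduct.map (adL x) LinearMap.id + TensorProduct.map LinearMap.id (adL x)

/-- `x ∧ y = x ⊗ y − y ⊗ x` for `x, y ∈ 𝔤`. -/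
def wT (x y : G) : T2 := x ⊗ₜ[ℝ] y - y ⊗ₜ[ℝ] x

/-- The ad-invariant symmetric element `½(P_a ⊗ J^a + J^a ⊗ P_a)`. -/
def tHalf : T2 :=
  ∑ a : Fin 3, ∑ b : Fin 3, ((1 : ℝ) / 2 * ηf a b) • (Pg a ⊗ₜ[ℝ] Jg b + Jg b ⊗ₜ[ℝ] Pg a)

/-!
For fixed `k`, both `ad J_k` and `ad P_k` act on the generators through the single matrix
`(J_k)^c_a = ε_{ka}^c`: `J_k` sends `J_a` to `ε_{ka}^c J_c` and `P_a` to `ε_{ka}^c P_c`, while `P_k`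
sends `J_a` to `ε_{ka}^c P_c` and kills `P_a`. Hence, whenever `J_k B + B J_kᵀ = 0`, the tensors
`B^{ab} (P_a ⊗ J_b + J_a ⊗ P_b)` and `B^{ab} P_a ⊗ P_b` are invariant under `span{J_k, P_k}`.
The metric `η` satisfies this condition by antisymmetry of `ε`, and therefore so does `J_k η`.
Taking `B = η` gives the symmetric part of `r(ψ,α)`, and `B = J_1 η`, which is antisymmetric with
`(2,0)` entry `1`, gives the other two terms.
-/

theorem lie_eq_zero_of_mem_span_pair {R L M : Type*} [CommRing R] [LieRing L] [LieAlgebra R L]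
    [AddCommGroup M] [Module R M] [LieRingModule L M] [LieModule R L M] {x y z : L} {m : M}
    (hy : ⁅y, m⁆ = 0) (hz : ⁅z, m⁆ = 0) (hx : x ∈ Submodule.span R {y, z}) : ⁅x, m⁆ = 0 := by
  obtain ⟨c, d, rfl⟩ := Submodule.mem_span_pair.mp hx
  rw [add_lie, smul_lie, smul_lie, hy, hz, smul_zero, smul_zero, add_zero]

section TensorOfMatrix

open scoped Matrix

variable {ι R L M N : Type*} [Fintype ι] [CommRing R]
  [AddCommGroup M] [Module R M] [AddCommGroup N] [Module R N]

theorem mul_mul_add_mul_transpose_eq_zero {A B : Matrix ι ι R} (h : A * B + B * Aᵀ = 0) :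
    A * (A * B) + A * B * Aᵀ = 0 := by
  rw [Matrix.mul_assoc A B, ← Matrix.mul_add, h, Matrix.mul_zero]

/-- The contraction `B^{ab} v_a ⊗ w_b` of two families of vectors with a matrix `B`. All terms of
`r(ψ,α)` are of this form, with `v` and `w` among `Jg` and `Pg`. -/
def tensorOfMatrix (B : Matrix ι ι R) (v : ι → M) (w : ι → N) : M ⊗[R] N :=
  ∑ a, ∑ b, B a b • (v a ⊗ₜ[R] w b)

/-- The family `a ↦ A^c_a v_c`, the upper index being the row index of `A`. For `A = J3 k` it
describes the adjoint action of `J_k` and `P_k` on the generators of iso(2,1). -/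
def changeFrame (A : Matrix ι ι R) (v : ι → M) (a : ι) : M :=
  ∑ c, A c a • v c

theorem tensorOfMatrix_add_left (B C : Matrix ι ι R) (v : ι → M) (w : ι → N) :
    tensorOfMatrix (B + C) v w = tensorOfMatrix B v w + tensorOfMatrix C v w := by
  simp only [tensorOfMatrix, Matrix.add_apply, add_smul, Finset.sum_add_distrib]

theorem tensorOfMatrix_zero_left (B : Matrix ι ι R) (w : ι → N) :
    tensorOfMatrix B (fun _ => (0 : M)) w = 0 := by
  simp [tensorOfMatrix]

theorem tensorOfMatrix_zero_right (B : Matrix ι ι R) (v : ι → M) :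
    tensorOfMatrix B v (fun _ => (0 : N)) = 0 := by
  simp [tensorOfMatrix]

theorem tensorOfMatrix_changeFrame_left (A B : Matrix ι ι R) (v : ι → M) (w : ι → N) :
    tensorOfMatrix B (changeFrame A v) w = tensorOfMatrix (A * B) v w := by
  simp only [tensorOfMatrix, changeFrame, Matrix.mul_apply, TensorProduct.sum_tmul,
    TensorProduct.smul_tmul', Finset.smul_sum, Finset.sum_smul, smul_smul, mul_comm (B _ _)]
  rw [Finset.sum_congr rfl fun _ _ => Finset.sum_comm, Finset.sum_comm]
  exact Finset.sum_congr rfl fun _ _ => Finset.sum_comm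

theorem tensorOfMatrix_changeFrame_right (A B : Matrix ι ι R) (v : ι → M) (w : ι → N) :
    tensorOfMatrix B v (changeFrame A w) = tensorOfMatrix (B * Aᵀ) v w := by
  simp only [tensorOfMatrix, changeFrame, Matrix.mul_apply, Matrix.transpose_apply,
    TensorProduct.tmul_sum, TensorProduct.tmul_smul, Finset.smul_sum, Finset.sum_smul, smul_smul]
  exact Finset.sum_congr rfl fun _ _ => Finset.sum_comm

theorem tensorOfMatrix_changeFrame_add_eq_zero {A B : Matrix ι ι R}
    (h : A * B + B * Aᵀ = 0) (v : ι → M) (w : ι → N) :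
    tensorOfMatrix B (changeFrame A v) w + tensorOfMatrix B v (changeFrame A w) = 0 := by
  rw [tensorOfMatrix_changeFrame_left, tensorOfMatrix_changeFrame_right,
    ← tensorOfMatrix_add_left, h]
  simp [tensorOfMatrix]

theorem lie_tensorOfMatrix [LieRing L] [LieAlgebra R L] [LieRingModule L M] [LieModule R L M]
    [LieRingModule L N] [LieModule R L N] (x : L) (B : Matrix ι ι R) (v : ι → M) (w : ι → N) :
    ⁅x, tensorOfMatrix B v w⁆ =
      tensorOfMatrix B (fun a => ⁅x, v a⁆) w + tensorOfMatrix B v (fun b => ⁅x, w b⁆) := by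
  simp only [tensorOfMatrix, lie_sum, lie_smul, TensorProduct.LieModule.lie_tmul_right, smul_add,
    Finset.sum_add_distrib]

end TensorOfMatrix

theorem J3_eq_vec : J3 = ![!![0, 0, 0; 0, 0, 1; 0, -1, 0], !![0, 0, 1; 0, 0, 0; 1, 0, 0],
    !![0, -1, 0; -1, 0, 0; 0, 0, 0]] := by
  funext a
  ext b c
  fin_cases a <;> fin_cases b <;> fin_cases c <;>
    norm_num [J3, ηf, eps, show (2 : Fin 3) ≠ 0 by decide]

theorem ηf_comm (a b : Fin 3) : ηf a b = ηf b a := by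
  rcases eq_or_ne a b with rfl | hab
  · rfl
  · rw [ηf, ηf, if_neg hab, if_neg hab.symm]

theorem minkowski_eq_diagonal : Matrix.of ηf = Matrix.diagonal ![1, -1, -1] := by
  ext a b
  fin_cases a <;> fin_cases b <;> simp [ηf]

section LieBrackets

open scoped Matrix

attribute [local instance] LieRing.ofAssociativeRing

theorem lie_algEmb_algEmb (u v : Matrix (Fin 3) (Fin 3) ℝ) (x y : Fin 3 → ℝ) :
    ⁅algEmb u x, algEmb v y⁆ = algEmb ⁅u, v⁆ (u *ᵥ y - v *ᵥ x) := by
  ext i j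
  fin_cases i <;> fin_cases j <;>
    simp [Ring.lie_def, algEmb, Matrix.mul_apply, Matrix.mulVec, dotProduct, Fin.sum_univ_succ]

theorem algEmb_zero : algEmb 0 0 = 0 := by
  ext i j
  simp [algEmb]

theorem algEmb_sum_smul {ι : Type*} (s : Finset ι) (f : ι → ℝ)
    (u : ι → Matrix (Fin 3) (Fin 3) ℝ) (x : ι → Fin 3 → ℝ) :
    algEmb (∑ c ∈ s, f c • u c) (∑ c ∈ s, f c • x c) = ∑ c ∈ s, f c • algEmb (u c) (x c) := by
  ext i j
  by_cases hi : (i : ℕ) < 3 <;> by_cases hj : (j : ℕ) < 3 <;>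
    simp [algEmb, Matrix.sum_apply, hi, hj]

theorem lie_J3_J3 (k a : Fin 3) : ⁅J3 k, J3 a⁆ = changeFrame (J3 k) J3 a := by
  ext i j
  fin_cases k <;> fin_cases a <;> fin_cases i <;> fin_cases j <;>
    simp [changeFrame, Ring.lie_def, J3_eq_vec, Fin.sum_univ_three]

theorem J3_apply_swap (k a c : Fin 3) : J3 a c k = -J3 k c a := by
  simp only [J3, eps, Matrix.of_apply]
  ring

theorem lie_Jg_Jg (k a : Fin 3) : ⁅Jg k, Jg a⁆ = changeFrame (J3 k) Jg a := by
  have h := algEmb_sum_smul Finset.univ (fun c => J3 k c a) J3 0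
  simp only [Pi.zero_apply, smul_zero, Finset.sum_const_zero] at h
  simp only [Jg, lie_algEmb_algEmb, lie_J3_J3, Matrix.mulVec_zero, sub_zero]
  exact h

theorem lie_Jg_Pg (k a : Fin 3) : ⁅Jg k, Pg a⁆ = changeFrame (J3 k) Pg a := by
  have h := algEmb_sum_smul Finset.univ (fun c => J3 k c a) 0 (fun c b => if b = c then 1 else 0)
  simp only [Pi.zero_apply, smul_zero, Finset.sum_const_zero] at h
  have hcol : J3 k *ᵥ (fun b => if b = a then 1 else 0) =
      ∑ c, J3 k c a • fun b => if b = c then 1 else 0 := by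
    ext b
    simp [Matrix.mulVec, dotProduct]
  simp only [Jg, Pg, lie_algEmb_algEmb, lie_zero, Matrix.zero_mulVec, sub_zero, hcol]
  exact h

theorem lie_Pg_Jg (k a : Fin 3) : ⁅Pg k, Jg a⁆ = changeFrame (J3 k) Pg a := by
  rw [← lie_skew, lie_Jg_Pg]
  simp only [changeFrame, J3_apply_swap k a, neg_smul, Finset.sum_neg_distrib, neg_neg]

theorem lie_Pg_Pg (a b : Fin 3) : ⁅Pg a, Pg b⁆ = 0 := by
  simp only [Pg, lie_algEmb_algEmb, lie_zero, Matrix.zero_mulVec, sub_zero, algEmb_zero]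

theorem adT_apply_eq_lie (x : G) (t : T2) : adT x t = ⁅x, t⁆ := rfl

theorem J3_mul_minkowski_add_eq_zero (k : Fin 3) :
    J3 k * Matrix.of ηf + Matrix.of ηf * (J3 k)ᵀ = 0 := by
  ext a b
  rw [minkowski_eq_diagonal, Matrix.add_apply, Matrix.mul_diagonal, Matrix.diagonal_mul]
  fin_cases k <;> fin_cases a <;> fin_cases b <;> simp [J3_eq_vec]

section Invariance

variable {k : Fin 3} {B : Matrix (Fin 3) (Fin 3) ℝ} {x : G}

theorem lie_tensorOfMatrix_Pg_Jg_add_eq_zero (hB : J3 k * B + B * (J3 k)ᵀ = 0)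
    (hx : x ∈ Submodule.span ℝ ({Jg k, Pg k} : Set G)) :
    ⁅x, tensorOfMatrix B Pg Jg + tensorOfMatrix B Jg Pg⁆ = 0 := by
  have hJ : ⁅Jg k, tensorOfMatrix B Pg Jg + tensorOfMatrix B Jg Pg⁆ = 0 := by
    simp only [lie_add, lie_tensorOfMatrix, lie_Jg_Jg, lie_Jg_Pg,
      tensorOfMatrix_changeFrame_add_eq_zero hB, add_zero]
  have hP : ⁅Pg k, tensorOfMatrix B Pg Jg + tensorOfMatrix B Jg Pg⁆ = 0 := by
    simp only [lie_add, lie_tensorOfMatrix, lie_Pg_Jg, lie_Pg_Pg, tensorOfMatrix_zero_left,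
      tensorOfMatrix_zero_right, zero_add, add_zero]
    rw [add_comm]
    exact tensorOfMatrix_changeFrame_add_eq_zero hB Pg Pg
  exact lie_eq_zero_of_mem_span_pair hJ hP hx

theorem lie_tensorOfMatrix_Pg_Pg_eq_zero (hB : J3 k * B + B * (J3 k)ᵀ = 0)
    (hx : x ∈ Submodule.span ℝ ({Jg k, Pg k} : Set G)) :
    ⁅x, tensorOfMatrix B Pg Pg⁆ = 0 := by
  have hJ : ⁅Jg k, tensorOfMatrix B Pg Pg⁆ = 0 := by
    simp only [lie_tensorOfMatrix, lie_Jg_Pg]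
    exact tensorOfMatrix_changeFrame_add_eq_zero hB Pg Pg
  have hP : ⁅Pg k, tensorOfMatrix B Pg Pg⁆ = 0 := by
    simp only [lie_tensorOfMatrix, lie_Pg_Pg, tensorOfMatrix_zero_left, tensorOfMatrix_zero_right,
      add_zero]
  exact lie_eq_zero_of_mem_span_pair hJ hP hx

end Invariance

theorem tHalf_eq_tensorOfMatrix :
    tHalf = (1 / 2 : ℝ) •
      (tensorOfMatrix (Matrix.of ηf) Pg Jg + tensorOfMatrix (Matrix.of ηf) Jg Pg) := by
  have hswap : tensorOfMatrix (Matrix.of ηf) Jg Pg =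
      ∑ a, ∑ b, ηf a b • (Jg b ⊗ₜ[ℝ] Pg a) := by
    simp only [tensorOfMatrix, Matrix.of_apply]
    rw [Finset.sum_comm]
    simp only [ηf_comm]
  rw [hswap]
  simp only [tHalf, tensorOfMatrix, Matrix.of_apply, smul_add, Finset.smul_sum,
    Finset.sum_add_distrib, smul_smul]

theorem tensorOfMatrix_J3_one_mul_minkowski (v w : Fin 3 → G) :
    tensorOfMatrix (J3 1 * Matrix.of ηf) v w = v 2 ⊗ₜ[ℝ] w 0 - v 0 ⊗ₜ[ℝ] w 2 := by
  have h : J3 1 * Matrix.of ηf = !![0, 0, -1; 0, 0, 0; 1, 0, 0] := by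
    ext a b
    rw [minkowski_eq_diagonal, Matrix.mul_diagonal]
    fin_cases a <;> fin_cases b <;> simp [J3_eq_vec]
  simp only [tensorOfMatrix, h, Matrix.of_apply, Matrix.cons_val', Matrix.cons_val_fin_one,
    Fin.sum_univ_three, Matrix.cons_val_zero, Matrix.cons_val_one, Matrix.cons_val]
  module

theorem wT_sub_wT_eq_tensorOfMatrix (v w : Fin 3 → G) :
    wT (v 2) (w 0) - wT (v 0) (w 2) = tensorOfMatrix (J3 1 * Matrix.of ηf) v w
      + tensorOfMatrix (J3 1 * Matrix.of ηf) w v := by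
  rw [tensorOfMatrix_J3_one_mul_minkowski, tensorOfMatrix_J3_one_mul_minkowski, wT, wT]
  abel

theorem wT_two_zero_eq_tensorOfMatrix (v : Fin 3 → G) :
    wT (v 2) (v 0) = tensorOfMatrix (J3 1 * Matrix.of ηf) v v := by
  rw [tensorOfMatrix_J3_one_mul_minkowski, wT]

theorem stmt10_general (k : Fin 3) (β γ : ℝ) {x : G}
    (hx : x ∈ Submodule.span ℝ ({Jg k, Pg k} : Set G)) :
    adT x (tHalf
      + β • (tensorOfMatrix (J3 k * Matrix.of ηf) Pg Jg
        + tensorOfMatrix (J3 k * Matrix.of ηf) Jg Pg)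
      + γ • tensorOfMatrix (J3 k * Matrix.of ηf) Pg Pg) = 0 := by
  have hη := J3_mul_minkowski_add_eq_zero k
  have hJη := mul_mul_add_mul_transpose_eq_zero hη
  simp only [tHalf_eq_tensorOfMatrix, map_add, map_smul, adT_apply_eq_lie, ← lie_add,
    lie_tensorOfMatrix_Pg_Jg_add_eq_zero hη hx, lie_tensorOfMatrix_Pg_Jg_add_eq_zero hJη hx,
    lie_tensorOfMatrix_Pg_Pg_eq_zero hJη hx, smul_zero, add_zero]

end LieBrackets

/-- For all ψ, α ∈ ℝ, the element
`r(ψ,α) = ½(P_a ⊗ J^a + J^a ⊗ P_a) + ½ tanh(ψ/2)(P₂ ∧ J₀ − P₀ ∧ J₂)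
          + (α / (4 cosh²(ψ/2))) P₂ ∧ P₀`
of iso(2,1) ⊗ iso(2,1) is invariant under the Cartan subalgebra 𝔥₂ = span{J₁, P₁}:
`(ad_x ⊗ id + id ⊗ ad_x)(r(ψ,α)) = 0` for every `x ∈ 𝔥₂`. -/
theorem stmt10 (ψ α : ℝ) :
    ∀ x ∈ Submodule.span ℝ ({Jg 1, Pg 1} : Set G),
      adT x (tHalf
        + (Real.tanh (ψ / 2) / 2) • (wT (Pg 2) (Jg 0) - wT (Pg 0) (Jg 2))
        + (α / (4 * Real.cosh (ψ / 2) ^ 2)) • wT (Pg 2) (Pg 0)) = 0 := by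
  intro x hx
  simpa only [wT_sub_wT_eq_tensorOfMatrix, wT_two_zero_eq_tensorOfMatrix]
    using stmt10_general 1 _ _ hx
end
end

section
/- Every Cartan subalgebra of iso(2,1) is conjugate, under the adjoint action of the Poincaré group ISO(2,1), to either 𝔥₁ = span{J₀, P₀} or 𝔥₂ = span{J₁, P₁}; that is, for every Cartan subalgebra 𝔥 ⊆ iso(2,1) there exists g ∈ ISO(2,1) with Ad(g)(𝔥) = 𝔥₁ or Ad(g)(𝔥) = 𝔥₂. -/
noncomputable section

open scoped TensorProduct

/-- The Minkowski metric as a 3×3 matrix. -/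
def ηm : Matrix (Fin 3) (Fin 3) ℝ := Matrix.of fun a b => ηf a b

/-- The full Lorentz group in three dimensions: {v | vᵀ η v = η}. -/
def LorentzSet : Set (Matrix (Fin 3) (Fin 3) ℝ) := {v | v.transpose * ηm * v = ηm}

theorem one_mem_LorentzSet : (1 : Matrix (Fin 3) (Fin 3) ℝ) ∈ LorentzSet := by
  simp [LorentzSet]

/-- The proper orthochronous Lorentz group SO⁺(2,1): the identity component of
the Lorentz group {v | vᵀ η v = η}. -/
def SOplus : Set (Matrix (Fin 3) (Fin 3) ℝ) :=
  Subtype.val '' connectedComponent (⟨1, one_mem_LorentzSet⟩ : LorentzSet)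

/-- Embedding of a pair (3×3 matrix `u`, vector `a`) as the 4×4 matrix `[[u, a], [0, 1]]`. -/
def grpEmb (u : Matrix (Fin 3) (Fin 3) ℝ) (a : Fin 3 → ℝ) : G :=
  Matrix.of fun i j =>
    if hi : (i : ℕ) < 3 then
      if hj : (j : ℕ) < 3 then u ⟨i, hi⟩ ⟨j, hj⟩ else a ⟨i, hi⟩
    else if (j : ℕ) < 3 then 0 else 1

/-- The Poincaré group ISO(2,1) = SO⁺(2,1) ⋉ ℝ³, realized as 4×4 matrices `[[u, a], [0, 1]]`. -/
def ISOgrp : Set G := {M | ∃ u ∈ SOplus, ∃ a : Fin 3 → ℝ, M = grpEmb u a}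

/-- The adjoint action `Ad(g) : x ↦ g x g⁻¹` as a linear map on the ambient matrix algebra. -/
def conjLin (g : G) : G →ₗ[ℝ] G :=
  (LinearMap.mulLeft ℝ g).comp (LinearMap.mulRight ℝ g⁻¹)

/-- Span of all brackets `⁅x, y⁆` with `x ∈ h`, `y ∈ k`. -/
def bracketSpan (h k : Submodule ℝ G) : Submodule ℝ G :=
  Submodule.span ℝ {z : G | ∃ x ∈ h, ∃ y ∈ k, z = ⁅x, y⁆}

/-- Lower central series of a subalgebra `h`. -/
def lcs (h : Submodule ℝ G) : ℕ → Submodule ℝ G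
  | 0 => h
  | n + 1 => bracketSpan h (lcs h n)

/-- `h` is a Cartan subalgebra of iso(2,1): a nilpotent Lie subalgebra of iso(2,1)
that coincides with its own normalizer in iso(2,1). -/
def IsCartanIn (h : Submodule ℝ G) : Prop :=
  h ≤ iso21 ∧ (∀ x ∈ h, ∀ y ∈ h, ⁅x, y⁆ ∈ h) ∧ (∃ n, lcs h n = ⊥) ∧
    (∀ x ∈ iso21, (∀ y ∈ h, ⁅x, y⁆ ∈ h) → x ∈ h)

/-
Over the dual numbers, `iso(2,1) = so(2,1) ⊗ ℝ[ε]` with `P_a = ε J_a`: it is `ℝ[ε]³` with the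
Lorentzian cross product. If `X · X` is a unit, then
`X ⨯ (X ⨯ Y) = (X · Y) X - (X · X) Y` shows that `ad X` has centralizer `ℝ[ε] X` and that nothing
else is killed by a power of it, so a Cartan subalgebra containing `X` equals `ℝ[ε] X`. Such an `X`
always exists: a subspace all of whose elements have null Lorentz part projects into a null line
`ℝ n`; self-normalization forces all translations into it, and then also an `m` with `m · m ≠ 0`
normalizing the line. Finally the adjoint action of the Poincaré group is `ℝ[ε]`-linear, and a
rotation, a boost and a translation bring `X` to a unit multiple of `e₀` or `e₁`.
-/

open Matrix Submodule
open scoped DualNumber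

/-- The Minkowski matrix `diag(1, -1, -1)` over a commutative ring. -/
def minkowskiMatrix (R : Type*) [CommRing R] : Matrix (Fin 3) (Fin 3) R := diagonal ![1, -1, -1]

/-- The Minkowski bilinear form on `R³`. -/
def minkowski {R : Type*} [CommRing R] : LinearMap.BilinForm R (Fin 3 → R) :=
  toBilin' (minkowskiMatrix R)

/-- The Lorentzian cross product `(x ⨯ₗ y)^c = ε_{ab}{}^c x^a y^b`: the Euclidean one with its free
index raised by the Minkowski metric. It is the bracket of `so(2,1)` in the basis `J_a`. -/
def lorentzCross {R : Type*} [CommRing R] : (Fin 3 → R) →ₗ[R] (Fin 3 → R) →ₗ[R] Fin 3 → R :=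
  crossProduct.compr₂ (toLin' (minkowskiMatrix R))

local infixl:74 " ⨯ₗ " => lorentzCross

section LorentzCross

variable {R : Type*} [CommRing R]

theorem minkowski_apply (x y : Fin 3 → R) :
    minkowski x y = x 0 * y 0 - x 1 * y 1 - x 2 * y 2 := by
  simp only [minkowski, minkowskiMatrix, toBilin'_apply', mulVec_diagonal, vec3_dotProduct,
    cons_val]
  ring

theorem lorentzCross_eq_mulVec (x y : Fin 3 → R) : x ⨯ₗ y = minkowskiMatrix R *ᵥ x ⨯₃ y := rfl

theorem lorentzCross_apply (x y : Fin 3 → R) :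
    x ⨯ₗ y = ![x 1 * y 2 - x 2 * y 1, x 0 * y 2 - x 2 * y 0, x 1 * y 0 - x 0 * y 1] := by
  ext i
  fin_cases i <;> simp [lorentzCross_eq_mulVec, minkowskiMatrix, mulVec_diagonal, cross_apply]

theorem lorentzCross_self (x : Fin 3 → R) : x ⨯ₗ x = 0 := by
  rw [lorentzCross_eq_mulVec, cross_self, mulVec_zero]

theorem neg_lorentzCross (x y : Fin 3 → R) : -(x ⨯ₗ y) = y ⨯ₗ x := by
  rw [lorentzCross_eq_mulVec, ← mulVec_neg, cross_anticomm, lorentzCross_eq_mulVec]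

theorem minkowski_self_lorentzCross (x y : Fin 3 → R) : minkowski x (x ⨯ₗ y) = 0 := by
  simp only [minkowski_apply, lorentzCross_apply, cons_val]
  ring

theorem lorentzCross_lorentzCross (x y z : Fin 3 → R) :
    x ⨯ₗ (y ⨯ₗ z) = minkowski x z • y - minkowski x y • z := by
  ext i
  fin_cases i <;> simp [minkowski_apply, lorentzCross_apply] <;> ring

theorem leibniz_lorentzCross (x y z : Fin 3 → R) :
    x ⨯ₗ y ⨯ₗ z = x ⨯ₗ (y ⨯ₗ z) - y ⨯ₗ (x ⨯ₗ z) := by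
  ext i
  fin_cases i <;> simp [lorentzCross_apply] <;> ring

theorem map_minkowski {S : Type*} [CommRing S] (f : R →+* S) (x y : Fin 3 → R) :
    f (minkowski x y) = minkowski (f ∘ x) (f ∘ y) := by
  simp [minkowski_apply]

theorem comp_lorentzCross {S : Type*} [CommRing S] (f : R →+* S) (x y : Fin 3 → R) :
    f ∘ (x ⨯ₗ y) = (f ∘ x) ⨯ₗ (f ∘ y) := by
  ext i
  fin_cases i <;> simp [lorentzCross_apply]

theorem lorentzCross_eq_zero_iff {x y : Fin 3 → R} (hx : IsUnit (minkowski x x)) :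
    x ⨯ₗ y = 0 ↔ y ∈ R ∙ x := by
  rw [mem_span_singleton]
  constructor
  · intro h
    have hy : minkowski x x • y = minkowski x y • x := by
      rw [eq_comm, ← sub_eq_zero, ← lorentzCross_lorentzCross, h, map_zero]
    obtain ⟨c, hc⟩ := hx.exists_left_inv
    exact ⟨c * minkowski x y, by rw [mul_smul, ← hy, smul_smul, hc, one_smul]⟩
  · rintro ⟨c, rfl⟩
    rw [map_smul, lorentzCross_self, smul_zero]

theorem lorentzCross_eq_zero_of_iterate {x y : Fin 3 → R} (hx : IsUnit (minkowski x x)) {n : ℕ}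
    (h : (x ⨯ₗ ·)^[n] y = 0) : x ⨯ₗ y = 0 := by
  induction n generalizing y with
  | zero => rw [show y = 0 from h, map_zero]
  | succ n ih =>
    have hxxy : x ⨯ₗ (x ⨯ₗ y) = 0 := ih h
    have hcube := lorentzCross_lorentzCross x x (x ⨯ₗ y)
    rw [hxxy, map_zero, minkowski_self_lorentzCross, zero_smul, zero_sub, zero_eq_neg] at hcube
    exact hx.smul_eq_zero.1 hcube

theorem exists_add_lorentzCross_eq_smul {x : Fin 3 → R} (hx : IsUnit (minkowski x x))
    (y : Fin 3 → R) : ∃ (a : Fin 3 → R) (s : R), y + a ⨯ₗ x = s • x := by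
  obtain ⟨c, hc⟩ := hx.exists_left_inv
  refine ⟨-c • (x ⨯ₗ y), c * minkowski x y, ?_⟩
  rw [map_smul, LinearMap.smul_apply, ← neg_lorentzCross x (x ⨯ₗ y), lorentzCross_lorentzCross,
    neg_smul_neg, smul_sub, smul_smul, smul_smul, hc, one_smul]
  abel

theorem minkowskiMatrix_mul_self : minkowskiMatrix R * minkowskiMatrix R = 1 := by
  rw [minkowskiMatrix, diagonal_mul_diagonal, ← diagonal_one]
  congr 1
  ext i
  fin_cases i <;> simp

theorem minkowski_mulVec {u : Matrix (Fin 3) (Fin 3) R}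
    (hu : uᵀ * minkowskiMatrix R * u = minkowskiMatrix R) (x y : Fin 3 → R) :
    minkowski (u *ᵥ x) (u *ᵥ y) = minkowski x y := by
  rw [minkowski, toBilin'_apply', toBilin'_apply', ← vecMul_transpose, ← dotProduct_mulVec,
    mulVec_mulVec, mulVec_mulVec, hu]

theorem mulVec_cross_mulVec (u : Matrix (Fin 3) (Fin 3) R) (x y : Fin 3 → R) :
    (u *ᵥ x) ⨯₃ (u *ᵥ y) = u.adjugateᵀ *ᵥ x ⨯₃ y := by
  ext i
  fin_cases i <;>
    simp [cross_apply, adjugate_fin_three, mulVec, vec3_dotProduct] <;> ring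

theorem mulVec_lorentzCross {u : Matrix (Fin 3) (Fin 3) R}
    (hu : uᵀ * minkowskiMatrix R * u = minkowskiMatrix R) (hdet : u.det = 1) (x y : Fin 3 → R) :
    u *ᵥ (x ⨯ₗ y) = (u *ᵥ x) ⨯ₗ (u *ᵥ y) := by
  have hinv : u * (minkowskiMatrix R * uᵀ * minkowskiMatrix R) = 1 := by
    rw [mul_eq_one_comm, Matrix.mul_assoc, Matrix.mul_assoc, ← Matrix.mul_assoc uᵀ, hu,
      minkowskiMatrix_mul_self]
  have hadjugate : u.adjugate = minkowskiMatrix R * uᵀ * minkowskiMatrix R := by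
    rw [← Matrix.mul_one u.adjugate, ← hinv, ← Matrix.mul_assoc, adjugate_mul, hdet, one_smul,
      Matrix.one_mul]
  have hη : (minkowskiMatrix R)ᵀ = minkowskiMatrix R := diagonal_transpose _
  have hcomm : minkowskiMatrix R * u.adjugateᵀ = u * minkowskiMatrix R := by
    rw [hadjugate, transpose_mul, transpose_mul, transpose_transpose, hη, ← Matrix.mul_assoc,
      minkowskiMatrix_mul_self, Matrix.one_mul]
  rw [lorentzCross_eq_mulVec, lorentzCross_eq_mulVec, mulVec_cross_mulVec, mulVec_mulVec,
    mulVec_mulVec, hcomm]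

/-- A subspace of `(R³, ⨯ₗ)` that contains its own normalizer. -/
def IsSelfNormalizing {k : Type*} [CommSemiring k] [Algebra k R] (K : Submodule k (Fin 3 → R)) :
    Prop :=
  ∀ x, (∀ y ∈ K, x ⨯ₗ y ∈ K) → x ∈ K

theorem IsSelfNormalizing.eq_span_singleton {k : Type*} [CommSemiring k] [Algebra k R]
    {K : Submodule k (Fin 3 → R)} (hK : IsSelfNormalizing K)
    (hnil : ∀ x ∈ K, ∀ y ∈ K, ∃ n, (x ⨯ₗ ·)^[n] y = 0) {x : Fin 3 → R} (hxK : x ∈ K)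
    (hx : IsUnit (minkowski x x)) : K = (R ∙ x).restrictScalars k := by
  have hle : ∀ y ∈ K, y ∈ R ∙ x := fun y hy =>
    let ⟨_, hn⟩ := hnil x hxK y hy
    (lorentzCross_eq_zero_iff hx).1 (lorentzCross_eq_zero_of_iterate hx hn)
  refine le_antisymm hle fun y hy => hK y fun z hz => ?_
  obtain ⟨c, rfl⟩ := mem_span_singleton.1 hy
  obtain ⟨d, rfl⟩ := mem_span_singleton.1 (hle z hz)
  simp only [map_smul, LinearMap.smul_apply, lorentzCross_self, smul_zero, zero_mem]

end LorentzCross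

section DualNumber

/-- The `so(2,1)` component of an element of `ℝ[ε]³ = so(2,1) ⊗ ℝ[ε]`. -/
def lorentzPart : (Fin 3 → ℝ[ε]) →ₗ[ℝ] Fin 3 → ℝ :=
  (TrivSqZeroExt.fstHom ℝ ℝ ℝ).toLinearMap.compLeft (Fin 3)

/-- The `ε`-component of an element of `ℝ[ε]³ = so(2,1) ⊗ ℝ[ε]`. -/
def translationPart : (Fin 3 → ℝ[ε]) →ₗ[ℝ] Fin 3 → ℝ :=
  (TrivSqZeroExt.sndHom ℝ ℝ).compLeft (Fin 3)

/-- The inclusion of `so(2,1)` into `ℝ[ε]³ = so(2,1) ⊗ ℝ[ε]`. -/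
def ofLorentz : (Fin 3 → ℝ) →ₗ[ℝ] Fin 3 → ℝ[ε] :=
  (TrivSqZeroExt.inlAlgHom ℝ ℝ ℝ).toLinearMap.compLeft (Fin 3)

theorem ofLorentz_add_eps_smul (X : Fin 3 → ℝ[ε]) :
    ofLorentz (lorentzPart X) + (ε : ℝ[ε]) • ofLorentz (translationPart X) = X := by
  ext i <;> simp [ofLorentz, lorentzPart, translationPart]

@[simp]
theorem lorentzPart_ofLorentz (x : Fin 3 → ℝ) : lorentzPart (ofLorentz x) = x := rfl

@[simp]
theorem lorentzPart_eps_smul (X : Fin 3 → ℝ[ε]) : lorentzPart ((ε : ℝ[ε]) • X) = 0 := by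
  ext i
  simp [lorentzPart]

@[simp]
theorem translationPart_eps_smul (X : Fin 3 → ℝ[ε]) :
    translationPart ((ε : ℝ[ε]) • X) = lorentzPart X := by
  ext i
  simp [lorentzPart, translationPart]

theorem lorentzPart_single (a : Fin 3) : lorentzPart (Pi.single a 1) = Pi.single a 1 := by
  ext i
  simp [lorentzPart, Pi.single_apply, apply_ite]

theorem translationPart_single (a : Fin 3) : translationPart (Pi.single a 1) = 0 := by
  ext i
  simp [translationPart, Pi.single_apply, apply_ite]

theorem lorentzPart_eq_zero_iff {X : Fin 3 → ℝ[ε]} :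
    lorentzPart X = 0 ↔ ∃ W : Fin 3 → ℝ[ε], X = (ε : ℝ[ε]) • W := by
  constructor
  · intro h
    exact ⟨ofLorentz (translationPart X), by rw [← ofLorentz_add_eps_smul X, h]; simp⟩
  · rintro ⟨W, rfl⟩
    exact lorentzPart_eps_smul W

theorem eps_smul_eq_of_lorentzPart_eq {X Y : Fin 3 → ℝ[ε]} (h : lorentzPart X = lorentzPart Y) :
    (ε : ℝ[ε]) • X = (ε : ℝ[ε]) • Y := by
  rw [← sub_eq_zero, ← map_sub] at h
  obtain ⟨W, hW⟩ := lorentzPart_eq_zero_iff.1 h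
  rw [← sub_eq_zero, ← smul_sub, hW, smul_smul, DualNumber.eps_mul_eps, zero_smul]

theorem lorentzPart_lorentzCross (X Y : Fin 3 → ℝ[ε]) :
    lorentzPart (X ⨯ₗ Y) = lorentzPart X ⨯ₗ lorentzPart Y :=
  comp_lorentzCross (TrivSqZeroExt.fstHom ℝ ℝ ℝ).toRingHom X Y

theorem translationPart_lorentzCross (X Y : Fin 3 → ℝ[ε]) :
    translationPart (X ⨯ₗ Y) =
      lorentzPart X ⨯ₗ translationPart Y - lorentzPart Y ⨯ₗ translationPart X := by
  ext i
  fin_cases i <;> simp [lorentzPart, translationPart, lorentzCross_apply] <;> ring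

theorem isUnit_minkowski_iff {X : Fin 3 → ℝ[ε]} :
    IsUnit (minkowski X X) ↔ minkowski (lorentzPart X) (lorentzPart X) ≠ 0 := by
  rw [TrivSqZeroExt.isUnit_iff_isUnit_fst, isUnit_iff_ne_zero]
  exact iff_of_eq (congrArg (· ≠ 0) (map_minkowski (TrivSqZeroExt.fstHom ℝ ℝ ℝ).toRingHom X X))

theorem restrictScalars_span_singleton (X : Fin 3 → ℝ[ε]) :
    (ℝ[ε] ∙ X).restrictScalars ℝ = span ℝ {X, (ε : ℝ[ε]) • X} := by
  ext Y
  rw [restrictScalars_mem, mem_span_singleton, mem_span_pair]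
  constructor
  · rintro ⟨c, rfl⟩
    exact ⟨c.fst, c.snd, by ext i <;> simp [mul_comm]⟩
  · rintro ⟨s, t, rfl⟩
    exact ⟨algebraMap ℝ ℝ[ε] s + algebraMap ℝ ℝ[ε] t * ε, by simp [add_smul, mul_smul]⟩

end DualNumber

section NullSubspaces

theorem eq_zero_of_minkowski_self_eq_zero {x : Fin 3 → ℝ} (hx : minkowski x x = 0) (h0 : x 0 = 0) :
    x = 0 := by
  rw [minkowski_apply, h0] at hx
  ext i
  fin_cases i <;> simp <;> nlinarith [sq_nonneg (x 1), sq_nonneg (x 2)]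

theorem exists_le_span_singleton_of_forall_minkowski_self_eq_zero {L : Submodule ℝ (Fin 3 → ℝ)}
    (hL : ∀ x ∈ L, minkowski x x = 0) : ∃ n : Fin 3 → ℝ, minkowski n n = 0 ∧ L ≤ ℝ ∙ n := by
  by_cases hbot : L = ⊥
  · subst hbot
    exact ⟨0, by simp, bot_le⟩
  obtain ⟨n, hn, hne⟩ := exists_mem_ne_zero_of_ne_bot hbot
  have hn0 : n 0 ≠ 0 := fun h => hne (eq_zero_of_minkowski_self_eq_zero (hL n hn) h)
  refine ⟨n, hL n hn, fun x hx => mem_span_singleton.2 ⟨x 0 / n 0, ?_⟩⟩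
  rw [eq_comm, ← sub_eq_zero]
  exact eq_zero_of_minkowski_self_eq_zero (hL _ (L.sub_mem hx (L.smul_mem _ hn))) (by simp [hn0])

theorem exists_lorentzCross_eq_smul_of_minkowski_self_eq_zero {n : Fin 3 → ℝ}
    (hn : minkowski n n = 0) :
    ∃ (m : Fin 3 → ℝ) (c : ℝ), minkowski m m ≠ 0 ∧ m ⨯ₗ n = c • n := by
  by_cases hn0 : n 0 = 0
  · refine ⟨Pi.single 0 1, 0, by simp [minkowski_apply], ?_⟩
    rw [eq_zero_of_minkowski_self_eq_zero hn hn0, map_zero, smul_zero]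
  · refine ⟨n ⨯ₗ Pi.single 0 1, -n 0, ?_, ?_⟩
    · have : minkowski (n ⨯ₗ Pi.single 0 1) (n ⨯ₗ Pi.single 0 1) = -n 0 ^ 2 := by
        simp [minkowski_apply, lorentzCross_apply] at hn ⊢
        linarith
      rw [this]
      exact neg_ne_zero.2 (pow_ne_zero 2 hn0)
    · rw [← neg_lorentzCross, lorentzCross_lorentzCross, hn]
      simp [minkowski_apply]

variable {K : Submodule ℝ (Fin 3 → ℝ[ε])}

theorem IsSelfNormalizing.eps_smul_mem (hK : IsSelfNormalizing K) {n : Fin 3 → ℝ}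
    (hn : minkowski n n = 0) (hKn : ∀ X ∈ K, lorentzPart X ∈ ℝ ∙ n) (W : Fin 3 → ℝ[ε]) :
    (ε : ℝ[ε]) • W ∈ K := by
  set N := ofLorentz n
  have descend (W) (hW : (ε : ℝ[ε]) • (N ⨯ₗ W) ∈ K) : (ε : ℝ[ε]) • W ∈ K := by
    refine hK _ fun X hX => ?_
    obtain ⟨c, hc⟩ := mem_span_singleton.1 (hKn X hX)
    have hεX : (ε : ℝ[ε]) • X = (ε : ℝ[ε]) • c • N :=
      eps_smul_eq_of_lorentzPart_eq (by rw [← hc, map_smul, lorentzPart_ofLorentz])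
    have : ((ε : ℝ[ε]) • W) ⨯ₗ X = -c • (ε : ℝ[ε]) • (N ⨯ₗ W) := by
      rw [map_smul, LinearMap.smul_apply, ← map_smul, hεX, map_smul, LinearMap.map_smul_of_tower,
        ← neg_lorentzCross N W]
      module
    rw [this]
    exact K.smul_mem _ hW
  -- `N ⨯ₗ ·` is nilpotent of order three because `n` is null, so three descents reach `W`.
  refine descend _ (descend _ (descend _ ?_))
  have hNN : minkowski N N = 0 :=
    (map_minkowski (algebraMap ℝ ℝ[ε]) n n).symm.trans (by rw [hn, map_zero])
  have hcube : N ⨯ₗ (N ⨯ₗ (N ⨯ₗ W)) = 0 := by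
    rw [lorentzCross_lorentzCross, minkowski_self_lorentzCross, hNN, zero_smul, zero_smul, sub_zero]
  rw [hcube, smul_zero]
  exact K.zero_mem

theorem IsSelfNormalizing.exists_isUnit_minkowski (hK : IsSelfNormalizing K) :
    ∃ X ∈ K, IsUnit (minkowski X X) := by
  by_contra! hnull
  obtain ⟨n, hn, hle⟩ := exists_le_span_singleton_of_forall_minkowski_self_eq_zero
    (L := K.map lorentzPart) <| by
      rintro _ ⟨X, hX, rfl⟩
      exact not_not.1 (mt isUnit_minkowski_iff.2 (hnull X hX))
  have hKn (X) (hX : X ∈ K) : lorentzPart X ∈ ℝ ∙ n := hle (mem_map_of_mem hX)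
  obtain ⟨m, c, hm, hmn⟩ := exists_lorentzCross_eq_smul_of_minkowski_self_eq_zero hn
  refine hnull (ofLorentz m) (hK _ fun X hX => ?_)
    (isUnit_minkowski_iff.2 (by rwa [lorentzPart_ofLorentz]))
  obtain ⟨d, hd⟩ := mem_span_singleton.1 (hKn X hX)
  have hpart : lorentzPart (ofLorentz m ⨯ₗ X - c • X) = 0 := by
    rw [map_sub, lorentzPart_lorentzCross, lorentzPart_ofLorentz, map_smul, ← hd, map_smul, hmn,
      smul_comm, sub_self]
  obtain ⟨W, hW⟩ := lorentzPart_eq_zero_iff.1 hpart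
  rw [← sub_add_cancel (ofLorentz m ⨯ₗ X) (c • X), hW]
  exact K.add_mem (hK.eps_smul_mem hn hKn W) (K.smul_mem c hX)

end NullSubspaces

section Realization

theorem algEmb_add (A B : Matrix (Fin 3) (Fin 3) ℝ) (x y : Fin 3 → ℝ) :
    algEmb (A + B) (x + y) = algEmb A x + algEmb B y := by
  ext i j
  fin_cases i <;> fin_cases j <;> simp [algEmb]

theorem algEmb_sub (A B : Matrix (Fin 3) (Fin 3) ℝ) (x y : Fin 3 → ℝ) :
    algEmb (A - B) (x - y) = algEmb A x - algEmb B y := by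
  rw [eq_sub_iff_add_eq, ← algEmb_add, sub_add_cancel, sub_add_cancel]

theorem algEmb_smul (c : ℝ) (A : Matrix (Fin 3) (Fin 3) ℝ) (x : Fin 3 → ℝ) :
    algEmb (c • A) (c • x) = c • algEmb A x := by
  ext i j
  fin_cases i <;> fin_cases j <;> simp [algEmb]

theorem algEmb_mul (A B : Matrix (Fin 3) (Fin 3) ℝ) (x y : Fin 3 → ℝ) :
    algEmb A x * algEmb B y = algEmb (A * B) (A *ᵥ y) := by
  ext i j
  fin_cases i <;> fin_cases j <;>
    simp [algEmb, mul_apply, mulVec, vec3_dotProduct, Fin.sum_univ_succ] <;> ring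

theorem grpEmb_mul_algEmb (u A : Matrix (Fin 3) (Fin 3) ℝ) (a x : Fin 3 → ℝ) :
    grpEmb u a * algEmb A x = algEmb (u * A) (u *ᵥ x) := by
  ext i j
  fin_cases i <;> fin_cases j <;>
    simp [algEmb, grpEmb, mul_apply, mulVec, vec3_dotProduct, Fin.sum_univ_succ] <;> ring

theorem algEmb_mul_grpEmb (A u : Matrix (Fin 3) (Fin 3) ℝ) (x a : Fin 3 → ℝ) :
    algEmb A x * grpEmb u a = algEmb (A * u) (A *ᵥ a + x) := by
  ext i j
  fin_cases i <;> fin_cases j <;>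
    simp [algEmb, grpEmb, mul_apply, mulVec, vec3_dotProduct, Fin.sum_univ_succ] <;> ring

theorem det_grpEmb (u : Matrix (Fin 3) (Fin 3) ℝ) (a : Fin 3 → ℝ) :
    (grpEmb u a).det = u.det := by
  rw [det_succ_row _ 3]
  simp [Fin.sum_univ_succ, grpEmb, det_fin_three, Fin.succAbove, Even.neg_pow,
    show Even 6 by decide]

/-- The matrix realization `ℝ[ε]³ → iso(2,1)`, sending the class of `e_a` to `J_a` and that of
`ε e_a` to `P_a`. -/
def isoElem : (Fin 3 → ℝ[ε]) →ₗ[ℝ] G where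
  toFun X := algEmb (LinearMap.toMatrix' (lorentzCross (lorentzPart X))) (translationPart X)
  map_add' X Y := by simp only [map_add, algEmb_add]
  map_smul' c X := by simp only [map_smul, algEmb_smul, RingHom.id_apply]

theorem isoElem_apply (X : Fin 3 → ℝ[ε]) :
    isoElem X =
      algEmb (LinearMap.toMatrix' (lorentzCross (lorentzPart X))) (translationPart X) :=
  rfl

theorem Jg_eq_isoElem (a : Fin 3) : Jg a = isoElem (Pi.single a 1) := by
  have h : J3 a = LinearMap.toMatrix' (lorentzCross (Pi.single a 1)) := by
    ext i j
    fin_cases a <;> fin_cases i <;> fin_cases j <;>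
      simp [J3, ηf, eps, LinearMap.toMatrix'_apply, lorentzCross_apply] <;> norm_num
  rw [isoElem_apply, Jg, h, lorentzPart_single, translationPart_single]

theorem Pg_eq_isoElem (a : Fin 3) : Pg a = isoElem ((ε : ℝ[ε]) • Pi.single a 1) := by
  rw [isoElem_apply, lorentzPart_eps_smul, translationPart_eps_smul, lorentzPart_single, map_zero,
    map_zero, Pg]
  congr
  ext b
  rw [Pi.single_apply]

theorem lie_isoElem (X Y : Fin 3 → ℝ[ε]) : ⁅isoElem X, isoElem Y⁆ = isoElem (X ⨯ₗ Y) := by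
  have h : LinearMap.toMatrix' (lorentzCross (lorentzPart X ⨯ₗ lorentzPart Y)) =
      LinearMap.toMatrix' (lorentzCross (lorentzPart X)) *
          LinearMap.toMatrix' (lorentzCross (lorentzPart Y)) -
        LinearMap.toMatrix' (lorentzCross (lorentzPart Y)) *
          LinearMap.toMatrix' (lorentzCross (lorentzPart X)) := by
    rw [← LinearMap.toMatrix'_comp, ← LinearMap.toMatrix'_comp, ← map_sub]
    exact congrArg _ (LinearMap.ext (leibniz_lorentzCross _ _))
  rw [Ring.lie_def, isoElem_apply, isoElem_apply, isoElem_apply, algEmb_mul, algEmb_mul,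
    ← algEmb_sub, LinearMap.toMatrix'_mulVec, LinearMap.toMatrix'_mulVec, lorentzPart_lorentzCross,
    translationPart_lorentzCross, h]

theorem isoElem_injective : Function.Injective isoElem := by
  rw [injective_iff_map_eq_zero]
  intro X hX
  have entry (i j) : isoElem X i j = 0 := congrFun₂ hX i j
  have hx : lorentzPart X = 0 := by
    ext i
    fin_cases i
    · simpa [isoElem_apply, algEmb, LinearMap.toMatrix'_apply, lorentzCross_apply] using entry 1 2
    · simpa [isoElem_apply, algEmb, LinearMap.toMatrix'_apply, lorentzCross_apply] using entry 0 2
    · simpa [isoElem_apply, algEmb, LinearMap.toMatrix'_apply, lorentzCross_apply] using entry 0 1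
  have hy : translationPart X = 0 := by
    ext i
    fin_cases i
    · simpa [isoElem_apply, algEmb] using entry 0 3
    · simpa [isoElem_apply, algEmb] using entry 1 3
    · simpa [isoElem_apply, algEmb] using entry 2 3
  rw [← ofLorentz_add_eps_smul X, hx, hy, map_zero, smul_zero, add_zero]

theorem isoElem_eq_sum (X : Fin 3 → ℝ[ε]) :
    isoElem X = ∑ a, (lorentzPart X a • Jg a + translationPart X a • Pg a) := by
  simp only [Jg_eq_isoElem, Pg_eq_isoElem, ← map_smul, ← map_add, ← map_sum]
  congr 1
  ext i <;> simp [lorentzPart, translationPart, Pi.single_apply, Finset.sum_add_distrib]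

theorem range_isoElem : LinearMap.range isoElem = iso21 := by
  apply le_antisymm
  · rintro _ ⟨X, rfl⟩
    rw [isoElem_eq_sum]
    exact sum_mem fun a _ => add_mem (smul_mem _ _ (subset_span (Or.inl ⟨a, rfl⟩)))
      (smul_mem _ _ (subset_span (Or.inr ⟨a, rfl⟩)))
  · rw [iso21, span_le]
    rintro _ (⟨a, rfl⟩ | ⟨a, rfl⟩)
    · exact ⟨_, (Jg_eq_isoElem a).symm⟩
    · exact ⟨_, (Pg_eq_isoElem a).symm⟩

end Realization

section Cartan

variable {h : Submodule ℝ G}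

theorem IsCartanIn.isSelfNormalizing_comap (hh : IsCartanIn h) :
    IsSelfNormalizing (h.comap isoElem) := by
  obtain ⟨hle, -, -, hnorm⟩ := hh
  refine fun X hX => hnorm _ (range_isoElem ▸ ⟨X, rfl⟩) fun y hy => ?_
  obtain ⟨Y, rfl⟩ := range_isoElem ▸ hle hy
  rw [lie_isoElem]
  exact hX Y hy

theorem iterate_lie_mem_lcs {x y : G} (hx : x ∈ h) (hy : y ∈ h) (n : ℕ) :
    (⁅x, ·⁆)^[n] y ∈ lcs h n := by
  induction n with
  | zero => exact hy
  | succ n ih =>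
    rw [Function.iterate_succ_apply']
    exact subset_span ⟨x, hx, _, ih, rfl⟩

theorem isoElem_iterate_lorentzCross (X Y : Fin 3 → ℝ[ε]) (n : ℕ) :
    isoElem ((X ⨯ₗ ·)^[n] Y) = (⁅isoElem X, ·⁆)^[n] (isoElem Y) :=
  Function.Semiconj.iterate_right (f := isoElem) (fun Z => (lie_isoElem X Z).symm) n Y

theorem IsCartanIn.exists_iterate_lorentzCross_eq_zero (hh : IsCartanIn h) {X Y : Fin 3 → ℝ[ε]}
    (hX : X ∈ h.comap isoElem) (hY : Y ∈ h.comap isoElem) : ∃ n, (X ⨯ₗ ·)^[n] Y = 0 := by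
  obtain ⟨-, -, ⟨n, hn⟩, -⟩ := hh
  refine ⟨n, isoElem_injective ?_⟩
  rw [isoElem_iterate_lorentzCross, map_zero, ← mem_bot ℝ, ← hn]
  exact iterate_lie_mem_lcs hX hY n

theorem IsCartanIn.exists_eq_map_span_singleton (hh : IsCartanIn h) :
    ∃ X : Fin 3 → ℝ[ε], IsUnit (minkowski X X) ∧
      h = ((ℝ[ε] ∙ X).restrictScalars ℝ).map isoElem := by
  have hK := hh.isSelfNormalizing_comap
  obtain ⟨X, hXK, hX⟩ := hK.exists_isUnit_minkowski
  refine ⟨X, hX, ?_⟩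
  rw [← hK.eq_span_singleton (fun _ hX _ hY => hh.exists_iterate_lorentzCross_eq_zero hX hY) hXK hX,
    map_comap_eq_self (range_isoElem ▸ hh.1)]

end Cartan

section LorentzGroup

theorem ηm_eq_minkowskiMatrix : ηm = minkowskiMatrix ℝ := by
  ext i j
  fin_cases i <;> fin_cases j <;> simp [ηm, ηf, minkowskiMatrix]

theorem mem_LorentzSet_iff {u : Matrix (Fin 3) (Fin 3) ℝ} :
    u ∈ LorentzSet ↔ uᵀ * minkowskiMatrix ℝ * u = minkowskiMatrix ℝ := by
  rw [← ηm_eq_minkowskiMatrix]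
  rfl

theorem mul_mem_LorentzSet {u v : Matrix (Fin 3) (Fin 3) ℝ} (hu : u ∈ LorentzSet)
    (hv : v ∈ LorentzSet) : u * v ∈ LorentzSet := by
  rw [mem_LorentzSet_iff] at hu hv ⊢
  calc (u * v)ᵀ * minkowskiMatrix ℝ * (u * v) = vᵀ * (uᵀ * minkowskiMatrix ℝ * u) * v := by
        simp only [transpose_mul, Matrix.mul_assoc]
    _ = minkowskiMatrix ℝ := by rw [hu, hv]

theorem SOplus_subset_LorentzSet : SOplus ⊆ LorentzSet := by
  rintro _ ⟨u, -, rfl⟩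
  exact u.2

theorem mem_SOplus_of_continuous {T : Type*} [TopologicalSpace T] [PreconnectedSpace T]
    {f : T → Matrix (Fin 3) (Fin 3) ℝ} (hf : Continuous f) (hL : ∀ t, f t ∈ LorentzSet) {t₀ : T}
    (h₀ : f t₀ = 1) (t : T) : f t ∈ SOplus := by
  let F : T → LorentzSet := fun t => ⟨f t, hL t⟩
  have hF : IsPreconnected (Set.range F) := isPreconnected_range (hf.subtype_mk hL)
  exact ⟨F t, hF.subset_connectedComponent ⟨t₀, Subtype.ext h₀⟩ ⟨t, rfl⟩, rfl⟩

theorem det_eq_one_or_neg_one_of_mem_LorentzSet {u : Matrix (Fin 3) (Fin 3) ℝ}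
    (hu : u ∈ LorentzSet) : u.det = 1 ∨ u.det = -1 := by
  have hη : (minkowskiMatrix ℝ).det = 1 := by
    simp [minkowskiMatrix, Fin.prod_univ_three]
  have hdet : u.det * u.det = 1 := by
    simpa [hη] using congrArg det (mem_LorentzSet_iff.1 hu)
  exact mul_self_eq_one_iff.1 hdet

theorem det_eq_one_of_mem_SOplus {u : Matrix (Fin 3) (Fin 3) ℝ} (hu : u ∈ SOplus) :
    u.det = 1 := by
  obtain ⟨u, hu, rfl⟩ := hu
  have hcont : Continuous fun v : LorentzSet => v.1.det := continuous_subtype_val.matrix_det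
  obtain ⟨d, -, hd⟩ := isPreconnected_connectedComponent.eqOn_const_of_mapsTo
    (T := {1, -1}) (Set.toFinite _).isDiscrete hcont.continuousOn
    (fun v _ => det_eq_one_or_neg_one_of_mem_LorentzSet v.2) ⟨1, Or.inl rfl⟩
  exact (hd hu).trans ((hd mem_connectedComponent).symm.trans det_one)

end LorentzGroup

section NormalForm

/-- The rotation by `θ` in the spatial plane spanned by `e₁` and `e₂`. -/
def spatialRotation (θ : ℝ) : Matrix (Fin 3) (Fin 3) ℝ :=
  !![1, 0, 0; 0, Real.cos θ, -Real.sin θ; 0, Real.sin θ, Real.cos θ]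

/-- The Lorentz boost of rapidity `t` in the plane spanned by `e₀` and `e₁`. -/
def lorentzBoost (t : ℝ) : Matrix (Fin 3) (Fin 3) ℝ :=
  !![Real.cosh t, Real.sinh t, 0; Real.sinh t, Real.cosh t, 0; 0, 0, 1]

theorem spatialRotation_mem_LorentzSet (θ : ℝ) : spatialRotation θ ∈ LorentzSet := by
  rw [mem_LorentzSet_iff]
  ext i j
  fin_cases i <;> fin_cases j <;>
    simp [spatialRotation, minkowskiMatrix, mul_apply, Fin.sum_univ_three] <;>
    linarith [Real.sin_sq_add_cos_sq θ]

theorem lorentzBoost_mem_LorentzSet (t : ℝ) : lorentzBoost t ∈ LorentzSet := by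
  rw [mem_LorentzSet_iff]
  ext i j
  fin_cases i <;> fin_cases j <;>
    simp [lorentzBoost, minkowskiMatrix, mul_apply, Fin.sum_univ_three] <;>
    linarith [Real.cosh_sq t]

theorem continuous_spatialRotation : Continuous spatialRotation := by
  unfold spatialRotation
  fun_prop

theorem continuous_lorentzBoost : Continuous lorentzBoost := by
  unfold lorentzBoost
  fun_prop

theorem lorentzBoost_mul_spatialRotation_mem_SOplus (t θ : ℝ) :
    lorentzBoost t * spatialRotation θ ∈ SOplus := by
  have hcont : Continuous fun p : ℝ × ℝ => lorentzBoost p.1 * spatialRotation p.2 :=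
    (continuous_lorentzBoost.comp continuous_fst).matrix_mul
      (continuous_spatialRotation.comp continuous_snd)
  refine mem_SOplus_of_continuous hcont (t₀ := 0) (fun p => mul_mem_LorentzSet
    (lorentzBoost_mem_LorentzSet _) (spatialRotation_mem_LorentzSet _)) ?_ (t, θ)
  simp [lorentzBoost, spatialRotation, ← one_fin_three]

theorem exists_spatialRotation_mulVec_eq (x : Fin 3 → ℝ) :
    ∃ θ ρ, spatialRotation θ *ᵥ x = ![x 0, ρ, 0] := by
  set z : ℂ := ⟨x 1, x 2⟩
  have h1 : x 1 = ‖z‖ * Real.cos z.arg := (Complex.norm_mul_cos_arg z).symm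
  have h2 : x 2 = ‖z‖ * Real.sin z.arg := (Complex.norm_mul_sin_arg z).symm
  have hmulVec (θ : ℝ) : spatialRotation θ *ᵥ x =
      ![x 0, Real.cos θ * x 1 - Real.sin θ * x 2, Real.sin θ * x 1 + Real.cos θ * x 2] := by
    ext i
    fin_cases i <;>
      simp [spatialRotation, mulVec, dotProduct, Fin.sum_univ_three, sub_eq_add_neg]
  refine ⟨-z.arg, ‖z‖, ?_⟩
  rw [hmulVec, Real.cos_neg, Real.sin_neg, h1, h2]
  congr 2
  · linear_combination ‖z‖ * Real.sin_sq_add_cos_sq z.arg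
  · congr 1
    ring

theorem exists_sinh_mul_add_cosh_mul_eq_zero {a b : ℝ} (h : b ^ 2 < a ^ 2) :
    ∃ t, Real.sinh t * a + Real.cosh t * b = 0 := by
  have hab : |b| < |a| := sq_lt_sq.1 h
  have ha : a ≠ 0 := abs_pos.1 ((abs_nonneg b).trans_lt hab)
  have hmem : -(b / a) ∈ Set.Ioo (-1 : ℝ) 1 := by
    rw [Set.mem_Ioo, ← abs_lt, abs_neg, abs_div, div_lt_one (abs_pos.2 ha)]
    exact hab
  refine ⟨Real.artanh (-(b / a)), ?_⟩
  have htanh := Real.tanh_artanh hmem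
  rw [Real.tanh_eq_sinh_div_cosh, div_eq_iff (Real.cosh_pos _).ne'] at htanh
  rw [htanh]
  field_simp
  ring

theorem exists_lorentzBoost_mulVec_eq {a b : ℝ} (h : a ^ 2 ≠ b ^ 2) :
    ∃ (t : ℝ) (i : Fin 3) (r : ℝ), (i = 0 ∨ i = 1) ∧
      lorentzBoost t *ᵥ ![a, b, 0] = r • Pi.single i 1 := by
  have hboost (t : ℝ) : lorentzBoost t *ᵥ ![a, b, 0] =
      ![Real.cosh t * a + Real.sinh t * b, Real.sinh t * a + Real.cosh t * b, 0] := by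
    ext i
    fin_cases i <;> simp [lorentzBoost, mulVec]
  obtain hlt | hlt := h.lt_or_gt
  · obtain ⟨t, ht⟩ := exists_sinh_mul_add_cosh_mul_eq_zero hlt
    refine ⟨t, 1, Real.sinh t * a + Real.cosh t * b, Or.inr rfl, ?_⟩
    rw [hboost, add_comm (Real.cosh t * a), ht]
    ext i
    fin_cases i <;> simp
  · obtain ⟨t, ht⟩ := exists_sinh_mul_add_cosh_mul_eq_zero hlt
    refine ⟨t, 0, Real.cosh t * a + Real.sinh t * b, Or.inl rfl, ?_⟩
    rw [hboost, ht]
    ext i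
    fin_cases i <;> simp

theorem exists_mem_SOplus_mulVec_eq_smul_single {x : Fin 3 → ℝ} (hx : minkowski x x ≠ 0) :
    ∃ u ∈ SOplus, ∃ (i : Fin 3) (r : ℝ), (i = 0 ∨ i = 1) ∧ u *ᵥ x = r • Pi.single i 1 := by
  obtain ⟨θ, ρ, hθ⟩ := exists_spatialRotation_mulVec_eq x
  have hρ : x 0 ^ 2 ≠ ρ ^ 2 := by
    rw [← minkowski_mulVec (mem_LorentzSet_iff.1 (spatialRotation_mem_LorentzSet θ)), hθ,
      minkowski_apply] at hx
    exact fun h => hx (by simpa [pow_two, sub_eq_zero] using h)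
  obtain ⟨t, i, r, hi, hr⟩ := exists_lorentzBoost_mulVec_eq hρ
  exact ⟨_, lorentzBoost_mul_spatialRotation_mem_SOplus t θ, i, r, hi,
    by rw [← mulVec_mulVec, hθ, hr]⟩

end NormalForm

section Adjoint

theorem lorentzPart_map_mulVec (u : Matrix (Fin 3) (Fin 3) ℝ) (X : Fin 3 → ℝ[ε]) :
    lorentzPart (u.map (algebraMap ℝ ℝ[ε]) *ᵥ X) = u *ᵥ lorentzPart X := by
  ext i
  simp [lorentzPart, mulVec, dotProduct, TrivSqZeroExt.algebraMap_eq_inl]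

theorem translationPart_map_mulVec (u : Matrix (Fin 3) (Fin 3) ℝ) (X : Fin 3 → ℝ[ε]) :
    translationPart (u.map (algebraMap ℝ ℝ[ε]) *ᵥ X) = u *ᵥ translationPart X := by
  ext i
  simp [translationPart, mulVec, dotProduct, TrivSqZeroExt.algebraMap_eq_inl]

/-- The action on `ℝ[ε]³ = so(2,1) ⊗ ℝ[ε]` that corresponds under `isoElem` to the adjoint action
of the Poincaré transformation `(u, a)`; it is `ℝ[ε]`-linear. -/
def poincareAd (u : Matrix (Fin 3) (Fin 3) ℝ) (a : Fin 3 → ℝ) :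
    (Fin 3 → ℝ[ε]) →ₗ[ℝ[ε]] Fin 3 → ℝ[ε] :=
  (LinearMap.id + (ε : ℝ[ε]) • lorentzCross (ofLorentz a)) ∘ₗ
    toLin' (u.map (algebraMap ℝ ℝ[ε]))

theorem lorentzPart_poincareAd (u : Matrix (Fin 3) (Fin 3) ℝ) (a : Fin 3 → ℝ)
    (X : Fin 3 → ℝ[ε]) : lorentzPart (poincareAd u a X) = u *ᵥ lorentzPart X := by
  simp [poincareAd, lorentzPart_map_mulVec]

theorem translationPart_poincareAd (u : Matrix (Fin 3) (Fin 3) ℝ) (a : Fin 3 → ℝ)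
    (X : Fin 3 → ℝ[ε]) : translationPart (poincareAd u a X) =
      u *ᵥ translationPart X + a ⨯ₗ (u *ᵥ lorentzPart X) := by
  simp [poincareAd, lorentzPart_map_mulVec, translationPart_map_mulVec, lorentzPart_lorentzCross]

theorem conjLin_isoElem {u : Matrix (Fin 3) (Fin 3) ℝ} (hu : u ∈ SOplus) (a : Fin 3 → ℝ)
    (X : Fin 3 → ℝ[ε]) : conjLin (grpEmb u a) (isoElem X) = isoElem (poincareAd u a X) := by
  have hdet := det_eq_one_of_mem_SOplus hu
  have hη := mem_LorentzSet_iff.1 (SOplus_subset_LorentzSet hu)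
  have hmul : u * LinearMap.toMatrix' (lorentzCross (lorentzPart X)) =
      LinearMap.toMatrix' (lorentzCross (u *ᵥ lorentzPart X)) * u := by
    refine toLin'.injective (LinearMap.ext fun y => ?_)
    simpa only [toLin'_mul, LinearMap.comp_apply, toLin'_apply, LinearMap.toMatrix'_mulVec] using
      mulVec_lorentzCross hη hdet (lorentzPart X) y
  have hcomm : grpEmb u a * isoElem X = isoElem (poincareAd u a X) * grpEmb u a := by
    rw [isoElem_apply, isoElem_apply, grpEmb_mul_algEmb, algEmb_mul_grpEmb, lorentzPart_poincareAd,
      translationPart_poincareAd, hmul, LinearMap.toMatrix'_mulVec, ← neg_lorentzCross a]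
    congr 1
    abel
  change grpEmb u a * (isoElem X * (grpEmb u a)⁻¹) = _
  rw [← mul_assoc, hcomm, mul_assoc, mul_nonsing_inv _ (by simp [det_grpEmb, hdet]), mul_one]

theorem exists_poincareAd_eq_smul_single {X : Fin 3 → ℝ[ε]} (hX : IsUnit (minkowski X X)) :
    ∃ u ∈ SOplus, ∃ (a : Fin 3 → ℝ) (i : Fin 3) (c : ℝ[ε]), (i = 0 ∨ i = 1) ∧ IsUnit c ∧
      poincareAd u a X = c • Pi.single i 1 := by
  rw [isUnit_minkowski_iff] at hX
  obtain ⟨u, hu, i, r, hi, hux⟩ := exists_mem_SOplus_mulVec_eq_smul_single hX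
  rw [← minkowski_mulVec (mem_LorentzSet_iff.1 (SOplus_subset_LorentzSet hu))] at hX
  have hr : r ≠ 0 := by
    rintro rfl
    exact hX (by rw [hux, zero_smul, map_zero])
  obtain ⟨a, s, has⟩ := exists_add_lorentzCross_eq_smul hX.isUnit (u *ᵥ translationPart X)
  refine ⟨u, hu, a, i, TrivSqZeroExt.inl r + TrivSqZeroExt.inr (s * r), hi, ?_, ?_⟩
  · simpa [TrivSqZeroExt.isUnit_iff_isUnit_fst] using hr
  · rw [← ofLorentz_add_eps_smul (poincareAd u a X), lorentzPart_poincareAd,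
      translationPart_poincareAd, has, hux]
    ext j <;> by_cases h : j = i <;> simp [ofLorentz, h]

theorem map_conjLin_map_isoElem {u : Matrix (Fin 3) (Fin 3) ℝ} (hu : u ∈ SOplus) (a : Fin 3 → ℝ)
    (X : Fin 3 → ℝ[ε]) :
    (((ℝ[ε] ∙ X).restrictScalars ℝ).map isoElem).map (conjLin (grpEmb u a)) =
      ((ℝ[ε] ∙ poincareAd u a X).restrictScalars ℝ).map isoElem := by
  have hlin : conjLin (grpEmb u a) ∘ₗ isoElem = isoElem ∘ₗ (poincareAd u a).restrictScalars ℝ :=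
    LinearMap.ext (conjLin_isoElem hu a)
  rw [← map_comp, hlin, map_comp]
  congr 1
  rw [← Set.image_singleton, ← map_span]
  rfl

theorem map_isoElem_span_single (i : Fin 3) :
    ((ℝ[ε] ∙ (Pi.single i 1 : Fin 3 → ℝ[ε])).restrictScalars ℝ).map isoElem =
      span ℝ {Jg i, Pg i} := by
  rw [restrictScalars_span_singleton, map_span, Set.image_pair, Jg_eq_isoElem, Pg_eq_isoElem]

end Adjoint

/-- Every Cartan subalgebra of iso(2,1) is conjugate, under the adjoint
action of the Poincaré group ISO(2,1), to 𝔥₁ = span{J₀, P₀} or to 𝔥₂ = span{J₁, P₁}. -/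
theorem stmt12 :
    ∀ h : Submodule ℝ G, IsCartanIn h →
      ∃ g ∈ ISOgrp,
        Submodule.map (conjLin g) h = Submodule.span ℝ ({Jg 0, Pg 0} : Set G) ∨
        Submodule.map (conjLin g) h = Submodule.span ℝ ({Jg 1, Pg 1} : Set G) := by
  intro h hh
  obtain ⟨X, hX, rfl⟩ := hh.exists_eq_map_span_singleton
  obtain ⟨u, hu, a, i, c, hi, hc, hXi⟩ := exists_poincareAd_eq_smul_single hX
  refine ⟨grpEmb u a, ⟨u, hu, a, rfl⟩, ?_⟩
  rw [map_conjLin_map_isoElem hu, hXi, span_singleton_smul_eq hc, map_isoElem_span_single]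
  exact hi.imp (by rintro rfl; rfl) (by rintro rfl; rfl)
end
end
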